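/- Let A be a subgroup of the center of L. If γ₀ ∈ Γ, u ∈ N⁻ ∪ N⁺ ∪ A, g ∈ S and γ₀·g·u ∈ S, then H(g) = H(γ₀·g·u); that is, the transitivity set is unchanged when the base point is moved by an element of Γ on the left and an element of N⁻ ∪ N⁺ ∪ A on the right. -/

import Mathlib

/-- `g'` is reachable from `g`. -/
def Reachable {G : Type*} [Group G] (Γ Nm Np : Subgroup G) (S : Set G) (g g' : G) : Prop :=
  ∃ hs : List G, (∀ h ∈ hs, h ∈ (↑Nm ∪ ↑Np : Set G)) ∧
    (∀ r ≤ hs.length, g * (hs.take r).prod ∈ S) ∧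
    ∃ γ ∈ Γ, γ * (g * hs.prod) = g'

/-! Reachability is an equivalence relation on `S`, invariant under right multiplication by `L`,
so `H` is constant on its classes. Moves by `Γ`, `N⁻` and `N⁺` stay within a class; a move by
`a ∈ A` may leave it, but right multiplication by `a` carries the pair `(g, g·l)` to
`(g·a, g·l·a) = (g·a, g·a·l)`. -/

section

variable {G : Type*} [Group G] {Γ Nm Np L : Subgroup G} {S : Set G}

namespace Reachable

variable {x y z u γ l : G}

theorem mul_left_self (hx : x ∈ S) (hγ : γ ∈ Γ) : Reachable Γ Nm Np S x (γ * x) :=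
  ⟨[], by simp, by simpa using hx, γ, hγ, by simp⟩

theorem refl (hx : x ∈ S) : Reachable Γ Nm Np S x x := by
  simpa using mul_left_self (Nm := Nm) (Np := Np) hx Γ.one_mem

theorem of_mul_left (hSΓ : ∀ s ∈ S, ∀ γ ∈ Γ, γ * s ∈ S) (hγ : γ ∈ Γ)
    (h : Reachable Γ Nm Np S (γ * x) y) : Reachable Γ Nm Np S x y := by
  obtain ⟨hs, hmem, hpath, δ, hδ, rfl⟩ := h
  refine ⟨hs, hmem, fun r hr => ?_, δ * γ, Γ.mul_mem hδ hγ, by group⟩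
  simpa [mul_assoc] using hSΓ _ (hpath r hr) γ⁻¹ (Γ.inv_mem hγ)

theorem of_mul_right (hx : x ∈ S) (hu : u ∈ (↑Nm ∪ ↑Np : Set G))
    (h : Reachable Γ Nm Np S (x * u) y) : Reachable Γ Nm Np S x y := by
  obtain ⟨hs, hmem, hpath, γ, hγ, rfl⟩ := h
  refine ⟨u :: hs, List.forall_mem_cons.2 ⟨hu, hmem⟩, fun r hr => ?_, γ, hγ, by simp [mul_assoc]⟩
  cases r with
  | zero => simpa using hx
  | succ r => simpa [mul_assoc] using hpath r (by simpa using hr)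

theorem head_induction_on {motive : G → Prop} (h : Reachable Γ Nm Np S x y)
    (base : ∀ x ∈ S, ∀ γ ∈ Γ, γ * x = y → motive x)
    (head : ∀ x ∈ S, ∀ u ∈ (↑Nm ∪ ↑Np : Set G), x * u ∈ S → motive (x * u) → motive x) :
    motive x := by
  obtain ⟨hs, hmem, hpath, γ, hγ, hy⟩ := h
  have hx : x ∈ S := by simpa using hpath 0 hs.length.zero_le
  induction hs generalizing x with
  | nil => exact base x hx γ hγ (by simpa using hy)
  | cons u hs ih =>
    obtain ⟨hu, hmem⟩ := List.forall_mem_cons.1 hmem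
    have hpath_tail : ∀ r ≤ hs.length, x * u * (hs.take r).prod ∈ S := fun r hr => by
      simpa [mul_assoc] using hpath (r + 1) (by simpa using hr)
    have hxu : x * u ∈ S := by simpa using hpath_tail 0 hs.length.zero_le
    exact head x hx u hu hxu (ih hmem hpath_tail (by simpa [mul_assoc] using hy) hxu)

theorem trans (hSΓ : ∀ s ∈ S, ∀ γ ∈ Γ, γ * s ∈ S) (hxy : Reachable Γ Nm Np S x y)
    (hyz : Reachable Γ Nm Np S y z) : Reachable Γ Nm Np S x z := by
  refine hxy.head_induction_on (motive := fun x => Reachable Γ Nm Np S x z) ?_ ?_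
  · rintro x - γ hγ rfl
    exact of_mul_left hSΓ hγ hyz
  · intro x hx u hu _ ih
    exact of_mul_right hx hu ih

theorem symm (hSΓ : ∀ s ∈ S, ∀ γ ∈ Γ, γ * s ∈ S) (h : Reachable Γ Nm Np S x y) :
    Reachable Γ Nm Np S y x := by
  refine h.head_induction_on (motive := fun x => Reachable Γ Nm Np S y x) ?_ ?_
  · rintro x hx γ hγ rfl
    exact of_mul_left hSΓ (Γ.inv_mem hγ) (by simpa using refl hx)
  · intro x hx u hu hxu ih
    have hu_inv : u⁻¹ ∈ (↑Nm ∪ ↑Np : Set G) := hu.imp Nm.inv_mem Np.inv_mem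
    exact ih.trans hSΓ (of_mul_right hxu hu_inv (by simpa using refl hx))

theorem mul_right (hlm : l ∈ Subgroup.normalizer (Nm : Set G))
    (hlp : l ∈ Subgroup.normalizer (Np : Set G)) (hSl : ∀ s ∈ S, s * l ∈ S)
    (h : Reachable Γ Nm Np S x y) : Reachable Γ Nm Np S (x * l) (y * l) := by
  refine h.head_induction_on (motive := fun x => Reachable Γ Nm Np S (x * l) (y * l)) ?_ ?_
  · rintro x hx γ hγ rfl
    simpa [mul_assoc] using mul_left_self (Nm := Nm) (Np := Np) (hSl x hx) hγ
  · intro x hx u hu _ ih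
    have hconj : l⁻¹ * u * l ∈ (↑Nm ∪ ↑Np : Set G) :=
      hu.imp (Subgroup.mem_normalizer_iff''.1 hlm u).1 (Subgroup.mem_normalizer_iff''.1 hlp u).1
    exact of_mul_right (hSl x hx) hconj (by simpa [mul_assoc] using ih)

end Reachable

theorem reachable_mul_right_iff (hLm : L ≤ Subgroup.normalizer (Nm : Set G))
    (hLp : L ≤ Subgroup.normalizer (Np : Set G)) (hSL : ∀ s ∈ S, ∀ l ∈ L, s * l ∈ S)
    {x y l : G} (hl : l ∈ L) :
    Reachable Γ Nm Np S (x * l) (y * l) ↔ Reachable Γ Nm Np S x y := by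
  have mul_right {x y l : G} (hl : l ∈ L) (h : Reachable Γ Nm Np S x y) :
      Reachable Γ Nm Np S (x * l) (y * l) :=
    h.mul_right (hLm hl) (hLp hl) fun s hs => hSL s hs l hl
  exact ⟨fun h => by simpa using mul_right (L.inv_mem hl) h, mul_right hl⟩

/-- The transitivity set `H(g)`, with its dependence on `Γ`, `N⁻`, `N⁺`, `L` and `S` explicit. -/
def transitivitySet (Γ Nm Np L : Subgroup G) (S : Set G) (g : G) : Set G :=
  {l | l ∈ L ∧ Reachable Γ Nm Np S g (g * l)}

theorem transitivitySet_eq_of_reachable (hSΓ : ∀ s ∈ S, ∀ γ ∈ Γ, γ * s ∈ S)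
    (hLm : L ≤ Subgroup.normalizer (Nm : Set G)) (hLp : L ≤ Subgroup.normalizer (Np : Set G))
    (hSL : ∀ s ∈ S, ∀ l ∈ L, s * l ∈ S) {g g' : G} (h : Reachable Γ Nm Np S g g') :
    transitivitySet Γ Nm Np L S g = transitivitySet Γ Nm Np L S g' := by
  ext l
  refine and_congr_right fun hl => ?_
  have hgl : Reachable Γ Nm Np S (g * l) (g' * l) :=
    (reachable_mul_right_iff hLm hLp hSL hl).2 h
  exact ⟨fun hH => ((h.symm hSΓ).trans hSΓ hH).trans hSΓ hgl,
    fun hH => (h.trans hSΓ hH).trans hSΓ (hgl.symm hSΓ)⟩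

theorem transitivitySet_mul_right_of_commute
    (hLm : L ≤ Subgroup.normalizer (Nm : Set G)) (hLp : L ≤ Subgroup.normalizer (Np : Set G))
    (hSL : ∀ s ∈ S, ∀ l ∈ L, s * l ∈ S) {a : G} (ha : a ∈ L) (hcomm : ∀ l ∈ L, Commute a l)
    (g : G) : transitivitySet Γ Nm Np L S (g * a) = transitivitySet Γ Nm Np L S g := by
  ext l
  refine and_congr_right fun hl => ?_
  have hgal : g * a * l = g * l * a := by rw [mul_assoc, (hcomm l hl).eq, mul_assoc]
  rw [hgal, reachable_mul_right_iff hLm hLp hSL ha]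

end

/-- If `A` is a subgroup of the center of `L`, `γ₀ ∈ Γ`, `u ∈ N⁻ ∪ N⁺ ∪ A`, `g ∈ S` and
`γ₀·g·u ∈ S`, then `H(g) = H(γ₀·g·u)`: the transitivity set is unchanged when the base
point is moved by an element of `Γ` on the left and of `N⁻ ∪ N⁺ ∪ A` on the right. -/
theorem transitivity_set_base_point_change {G : Type*} [Group G]
    (Γ Nm Np L A : Subgroup G) (S : Set G)
    (hnormm : ∀ l ∈ L, ∀ n ∈ Nm, l * n * l⁻¹ ∈ Nm)
    (hnormp : ∀ l ∈ L, ∀ n ∈ Np, l * n * l⁻¹ ∈ Np)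
    (hSΓ : ∀ s ∈ S, ∀ γ ∈ Γ, γ * s ∈ S)
    (hSL : ∀ s ∈ S, ∀ l ∈ L, s * l ∈ S)
    (hAL : A ≤ L) (hAcentral : ∀ a ∈ A, ∀ l ∈ L, a * l = l * a)
    (γ₀ : G) (hγ₀ : γ₀ ∈ Γ) (u : G) (hu : u ∈ (↑Nm ∪ ↑Np ∪ ↑A : Set G))
    (g : G) (hg : g ∈ S) (hg' : γ₀ * g * u ∈ S) :
    {l : G | l ∈ L ∧ Reachable Γ Nm Np S g (g * l)} =
      {l : G | l ∈ L ∧ Reachable Γ Nm Np S (γ₀ * g * u) (γ₀ * g * u * l)} := by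
  change transitivitySet Γ Nm Np L S g = transitivitySet Γ Nm Np L S (γ₀ * g * u)
  have hLm : L ≤ Subgroup.normalizer (Nm : Set G) := Subgroup.le_normalizer_iff.2 hnormm
  have hLp : L ≤ Subgroup.normalizer (Np : Set G) := Subgroup.le_normalizer_iff.2 hnormp
  have hγg : γ₀ * g ∈ S := hSΓ g hg γ₀ hγ₀
  rw [transitivitySet_eq_of_reachable hSΓ hLm hLp hSL (.of_mul_left hSΓ hγ₀ (.refl hγg))]
  rcases hu with hN | hA
  · exact transitivitySet_eq_of_reachable hSΓ hLm hLp hSL (.of_mul_right hγg hN (.refl hg'))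
  · exact (transitivitySet_mul_right_of_commute hLm hLp hSL (hAL hA) (hAcentral u hA) _).symm
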